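/- arXiv:2111.00371 — 6 statements merged into one kernel-verified Lean document; each statement's English description precedes it below -/
import Mathlib

section
/- Let (A, R, S, α, β, ξ, ζ) be a double curved Rota-Baxter BiHom-system and define a∗b = R(a)b + aS(b) for all a, b ∈ A. Then the operation ∗ satisfies the BiHom-associativity law (a∗b)∗β(c) = α(a)∗(b∗c) for all a, b, c ∈ A (so that (A, ∗, α, β) is a BiHom-associative algebra) if and only if α(a)·ζ(b⊗c) = ξ(a⊗b)·β(c) for all a, b, c ∈ A, where · denotes the original multiplication of A. -/
open TensorProduct

/-- The product `a ∗ b = R(a)·b + a·S(b)` associated to a double curved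
Rota-Baxter BiHom-system. -/
def bstar {K A : Type*} [Field K] [NonUnitalNonAssocRing A] [Module K A]
    [SMulCommClass K A A] [IsScalarTower K A A]
    (R S : A →ₗ[K] A) (a b : A) : A :=
  R a * b + a * S b

/-- Lemma 3.7(1): for a double curved Rota-Baxter BiHom-system
`(A, R, S, α, β, ξ, ζ)`, the product `a∗b = R(a)b + aS(b)` is BiHom-associative iff
`α(a)ζ(b⊗c) = ξ(a⊗b)β(c)` for all `a, b, c`. -/
theorem stmt3 {K A : Type*} [Field K] [NonUnitalNonAssocRing A] [Module K A]
    [SMulCommClass K A A] [IsScalarTower K A A]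
    (α β R S : A →ₗ[K] A) (ξ ζ : A ⊗[K] A →ₗ[K] A)
    -- BiHom-associative algebra axioms for (A, ·, α, β)
    (hαβ : ∀ a, α (β a) = β (α a))
    (hαmul : ∀ a b, α (a * b) = α a * α b)
    (hβmul : ∀ a b, β (a * b) = β a * β b)
    (hassoc : ∀ a b c, α a * (b * c) = (a * b) * β c)
    -- R, S commute with α and β
    (hRα : ∀ a, R (α a) = α (R a)) (hRβ : ∀ a, R (β a) = β (R a))
    (hSα : ∀ a, S (α a) = α (S a)) (hSβ : ∀ a, S (β a) = β (S a))
    -- double curved Rota-Baxter BiHom-system identities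
    (hR : ∀ a b, R a * R b = R (R a * b) + R (a * S b) + ξ (a ⊗ₜ[K] b))
    (hS : ∀ a b, S a * S b = S (R a * b) + S (a * S b) + ζ (a ⊗ₜ[K] b)) :
    (∀ a b c, bstar R S (bstar R S a b) (β c) = bstar R S (α a) (bstar R S b c)) ↔
      (∀ a b c, α a * ζ (b ⊗ₜ[K] c) = ξ (a ⊗ₜ[K] b) * β c) := by
  have key : ∀ a b c, bstar R S (bstar R S a b) (β c) - bstar R S (α a) (bstar R S b c)
      = α a * ζ (b ⊗ₜ[K] c) - ξ (a ⊗ₜ[K] b) * β c := by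
    intro a b c
    have h1 : ξ (a ⊗ₜ[K] b) = R a * R b - (R (R a * b) + R (a * S b)) := by
      rw [hR]; abel
    have h2 : ζ (b ⊗ₜ[K] c) = S b * S c - (S (R b * c) + S (b * S c)) := by
      rw [hS]; abel
    simp only [bstar, h1, h2, map_add, mul_add, add_mul, mul_sub, sub_mul, hRα, hSβ, hassoc]
    abel
  constructor
  · intro h a b c
    exact sub_eq_zero.mp ((key a b c).symm.trans (sub_eq_zero.mpr (h a b c)))
  · intro h a b c
    exact sub_eq_zero.mp ((key a b c).trans (sub_eq_zero.mpr (h a b c)))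
end

section
/- Let (A, R, S, α, β, ξ, ξ) be a curved Rota-Baxter BiHom-system (a double curved Rota-Baxter BiHom-system with ζ = ξ) and define a∗b = R(a)b + aS(b). Then the operation ∗ satisfies the BiHom-associativity law (a∗b)∗β(c) = α(a)∗(b∗c) for all a, b, c ∈ A if and only if α(a)·ξ(b⊗c) = ξ(a⊗b)·β(c) for all a, b, c ∈ A, where · denotes the original multiplication of A. -/
open TensorProduct

/-- Theorem 3.9(1): for a curved Rota-Baxter BiHom-system
`(A, R, S, α, β, ξ, ξ)` (i.e. a double curved one with `ζ = ξ`), the product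
`a∗b = R(a)b + aS(b)` is BiHom-associative iff `α(a)ξ(b⊗c) = ξ(a⊗b)β(c)`. -/
theorem stmt5 {K A : Type*} [Field K] [NonUnitalNonAssocRing A] [Module K A]
    [SMulCommClass K A A] [IsScalarTower K A A]
    (α β R S : A →ₗ[K] A) (ξ : A ⊗[K] A →ₗ[K] A)
    -- BiHom-associative algebra axioms for (A, ·, α, β)
    (hαβ : ∀ a, α (β a) = β (α a))
    (hαmul : ∀ a b, α (a * b) = α a * α b)
    (hβmul : ∀ a b, β (a * b) = β a * β b)
    (hassoc : ∀ a b c, α a * (b * c) = (a * b) * β c)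
    -- R, S commute with α and β
    (hRα : ∀ a, R (α a) = α (R a)) (hRβ : ∀ a, R (β a) = β (R a))
    (hSα : ∀ a, S (α a) = α (S a)) (hSβ : ∀ a, S (β a) = β (S a))
    -- curved Rota-Baxter BiHom-system identities (ζ = ξ)
    (hR : ∀ a b, R a * R b = R (R a * b) + R (a * S b) + ξ (a ⊗ₜ[K] b))
    (hS : ∀ a b, S a * S b = S (R a * b) + S (a * S b) + ξ (a ⊗ₜ[K] b)) :
    (∀ a b c, bstar R S (bstar R S a b) (β c) = bstar R S (α a) (bstar R S b c)) ↔
      (∀ a b c, α a * ξ (b ⊗ₜ[K] c) = ξ (a ⊗ₜ[K] b) * β c) := by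
  have key : ∀ a b c, bstar R S (bstar R S a b) (β c) - bstar R S (α a) (bstar R S b c)
      = α a * ξ (b ⊗ₜ[K] c) - ξ (a ⊗ₜ[K] b) * β c := by
    intro a b c
    have h1 : R (R a * b) + R (a * S b) = R a * R b - ξ (a ⊗ₜ[K] b) := by
      rw [hR a b]; abel
    have h2 : S (R b * c) + S (b * S c) = S b * S c - ξ (b ⊗ₜ[K] c) := by
      rw [hS b c]; abel
    simp only [bstar, map_add]
    rw [h1, h2, hSβ, hRα, sub_mul, mul_sub, mul_add, add_mul, hassoc, hassoc, hassoc]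
    abel
  constructor
  · intro h a b c
    have := key a b c
    rw [h a b c, sub_self] at this
    exact sub_eq_zero.mp this.symm
  · intro h a b c
    have := key a b c
    rw [h a b c, sub_self] at this
    exact sub_eq_zero.mp this
end

section
/- Let (A, μ, R, α, β) be a Rota-Baxter BiHom-associative algebra of weight λ, and define operations a≺b = aR(b) and a≻b = R(a)b + λab for all a, b ∈ A. Then (A, ≺, ≻, α, β) is a BiHom-dendriform algebra. -/
/-- `a ≺ b = a·R(b)`. -/
def precOp {K A : Type*} [Field K] [NonUnitalNonAssocRing A] [Module K A]
    [SMulCommClass K A A] [IsScalarTower K A A]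
    (R : A →ₗ[K] A) (a b : A) : A :=
  a * R b

/-- `a ≻ b = R(a)·b + λ·a·b`. -/
def succOp {K A : Type*} [Field K] [NonUnitalNonAssocRing A] [Module K A]
    [SMulCommClass K A A] [IsScalarTower K A A]
    (R : A →ₗ[K] A) (lam : K) (a b : A) : A :=
  R a * b + lam • (a * b)

/-- Corollary 3.3: if `(A, μ, R, α, β)` is a Rota-Baxter
BiHom-associative algebra of weight `λ`, then `(A, ≺, ≻, α, β)` with
`a ≺ b = aR(b)` and `a ≻ b = R(a)b + λab` is a BiHom-dendriform algebra. -/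
theorem stmt15 {K A : Type*} [Field K] [NonUnitalNonAssocRing A] [Module K A]
    [SMulCommClass K A A] [IsScalarTower K A A]
    (α β R : A →ₗ[K] A) (lam : K)
    -- BiHom-associative algebra axioms for (A, ·, α, β)
    (hαβ : ∀ a, α (β a) = β (α a))
    (hαmul : ∀ a b, α (a * b) = α a * α b)
    (hβmul : ∀ a b, β (a * b) = β a * β b)
    (hassoc : ∀ a b c, α a * (b * c) = (a * b) * β c)
    -- Rota-Baxter operator of weight λ commuting with α and β
    (hRα : ∀ a, R (α a) = α (R a)) (hRβ : ∀ a, R (β a) = β (R a))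
    (hRB : ∀ a b, R a * R b = R (R a * b) + R (a * R b) + lam • R (a * b)) :
    (∀ a b, α (precOp R a b) = precOp R (α a) (α b)) ∧
    (∀ a b, α (succOp R lam a b) = succOp R lam (α a) (α b)) ∧
    (∀ a b, β (precOp R a b) = precOp R (β a) (β b)) ∧
    (∀ a b, β (succOp R lam a b) = succOp R lam (β a) (β b)) ∧
    (∀ a b c, precOp R (precOp R a b) (β c) =
      precOp R (α a) (precOp R b c) + precOp R (α a) (succOp R lam b c)) ∧
    (∀ a b c, precOp R (succOp R lam a b) (β c) = succOp R lam (α a) (precOp R b c)) ∧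
    (∀ a b c, succOp R lam (α a) (succOp R lam b c) =
      succOp R lam (precOp R a b) (β c) + succOp R lam (succOp R lam a b) (β c)) := by
  refine ⟨?_, ?_, ?_, ?_, ?_, ?_, ?_⟩
  · intro a b
    simp only [precOp, hαmul, hRα]
  · intro a b
    simp only [succOp, map_add, map_smul, hαmul, hRα]
  · intro a b
    simp only [precOp, hβmul, hRβ]
  · intro a b
    simp only [succOp, map_add, map_smul, hβmul, hRβ]
  · intro a b c
    simp only [precOp, succOp, hRβ, ← hassoc, hRB, map_add, map_smul, mul_add]
    abel
  · intro a b c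
    simp only [precOp, succOp, hRβ, hRα, hassoc, add_mul, smul_mul_assoc]
  · intro a b c
    simp only [precOp, succOp, hRα, hassoc, mul_add, add_mul, smul_add, mul_smul_comm,
      smul_mul_assoc, hRB, map_add, map_smul]
    abel
end

section
/- Let (A, μ, R, α, β) be a Rota-Baxter BiHom-associative algebra of weight λ such that α and β are bijective, and define a⋆b = R(a)b + λab − α⁻¹β(b)·R(αβ⁻¹(a)) for all a, b ∈ A. Then (A, ⋆, α, β) is a BiHom-pre-Lie algebra. -/
/-- `a ⋆ b = R(a)b + λab − α⁻¹β(b)·R(αβ⁻¹(a))`. -/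
def starOp {K A : Type*} [Field K] [NonUnitalNonAssocRing A] [Module K A]
    [SMulCommClass K A A] [IsScalarTower K A A]
    (α β : A ≃ₗ[K] A) (R : A →ₗ[K] A) (lam : K) (a b : A) : A :=
  R a * b + lam • (a * b) - α.symm (β b) * R (α (β.symm a))

theorem rb_prelie {K A : Type*} [Field K] [AddCommGroup A] [Module K A]
    (m : A →ₗ[K] A →ₗ[K] A) (R : A →ₗ[K] A) (lam : K)
    (ha : ∀ x y z, m (m x y) z = m x (m y z))
    (hR : ∀ x y, R (m (R x) y) = m (R x) (R y) - R (m x (R y)) - lam • R (m x y))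
    (S : A → A → A) (hS : ∀ x y, S x y = m (R x) y + lam • m x y - m y (R x)) (x y z : A) :
    S x (S y z) - S (S x y) z = S y (S x z) - S (S y x) z := by
  simp only [hS, map_add, map_sub, map_smul, LinearMap.add_apply, LinearMap.sub_apply,
    LinearMap.smul_apply, hR, ha]
  module

/-- Proposition 3.5: if `(A, μ, R, α, β)` is a Rota-Baxter
BiHom-associative algebra of weight `λ` with `α, β` bijective, then
`a ⋆ b = R(a)b + λab − α⁻¹β(b)R(αβ⁻¹(a))` makes `(A, ⋆, α, β)` a
BiHom-pre-Lie algebra. -/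
theorem stmt16 {K A : Type*} [Field K] [NonUnitalNonAssocRing A] [Module K A]
    [SMulCommClass K A A] [IsScalarTower K A A]
    (α β : A ≃ₗ[K] A) (R : A →ₗ[K] A) (lam : K)
    -- BiHom-associative algebra axioms for (A, ·, α, β)
    (hαβ : ∀ a, α (β a) = β (α a))
    (hαmul : ∀ a b, α (a * b) = α a * α b)
    (hβmul : ∀ a b, β (a * b) = β a * β b)
    (hassoc : ∀ a b c, α a * (b * c) = (a * b) * β c)
    -- Rota-Baxter operator of weight λ commuting with α and β
    (hRα : ∀ a, R (α a) = α (R a)) (hRβ : ∀ a, R (β a) = β (R a))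
    (hRB : ∀ a b, R a * R b = R (R a * b) + R (a * R b) + lam • R (a * b)) :
    (∀ a b, α (starOp α β R lam a b) = starOp α β R lam (α a) (α b)) ∧
    (∀ a b, β (starOp α β R lam a b) = starOp α β R lam (β a) (β b)) ∧
    (∀ a b c,
      starOp α β R lam (α (β a)) (starOp α β R lam (α b) c) -
        starOp α β R lam (starOp α β R lam (β a) (α b)) (β c) =
      starOp α β R lam (α (β b)) (starOp α β R lam (α a) c) -
        starOp α β R lam (starOp α β R lam (β b) (α a)) (β c)) := by
  have hαs : ∀ a b, α.symm (a * b) = α.symm a * α.symm b := fun a b => by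
    apply α.injective; simp [hαmul]
  have hβs : ∀ a b, β.symm (a * b) = β.symm a * β.symm b := fun a b => by
    apply β.injective; simp [hβmul]
  have hβsα : ∀ a, β.symm (α a) = α (β.symm a) := fun a => by
    apply β.injective; simp [← hαβ]
  have hαsβ : ∀ a, α.symm (β a) = β (α.symm a) := fun a => by
    apply α.injective; simp [hαβ]
  have hss : ∀ a, α.symm (β.symm a) = β.symm (α.symm a) := fun a => by
    apply α.injective; simp [← hβsα]
  have hRαs : ∀ a, R (α.symm a) = α.symm (R a) := fun a => by
    apply α.injective; simp [← hRα]
  have hRβs : ∀ a, R (β.symm a) = β.symm (R a) := fun a => by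
    apply β.injective; simp [← hRβ]
  let m : A →ₗ[K] A →ₗ[K] A := LinearMap.mk₂ K (fun x y => α.symm x * β.symm y)
    (by intros; simp [add_mul]) (by intros; simp [smul_mul_assoc])
    (by intros; simp [mul_add]) (by intros; simp [mul_smul_comm])
  have hm : ∀ x y, m x y = α.symm x * β.symm y := fun x y => rfl
  have ha : ∀ x y z, m (m x y) z = m x (m y z) := fun x y z => by
    have h := hassoc (α.symm (α.symm x)) (α.symm (β.symm y)) (β.symm (β.symm z))
    simp only [LinearEquiv.apply_symm_apply] at h
    simp only [hm, hαs, hβs, ← hss, h]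
  have hR : ∀ x y, R (m (R x) y) = m (R x) (R y) - R (m x (R y)) - lam • R (m x y) := fun x y => by
    have h := hRB (α.symm x) (β.symm y)
    simp only [hm, ← hRαs, ← hRβs, h]
    abel
  let S : A → A → A := fun x y => m (R x) y + lam • m x y - m y (R x)
  have hS : ∀ x y, S x y = m (R x) y + lam • m x y - m y (R x) := fun _ _ => rfl
  have hst : ∀ a b, starOp α β R lam a b = S (α a) (β b) := fun a b => by
    simp [starOp, hS, hm, hRα, hRβs, hβsα]
  have hαS : ∀ x y, α (S x y) = S (α x) (α y) := fun x y => by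
    simp [hS, hm, hαmul, hRα, hβsα]
  have hβS : ∀ x y, β (S x y) = S (β x) (β y) := fun x y => by
    simp [hS, hm, hβmul, hRβ, hαsβ]
  refine ⟨fun a b => ?_, fun a b => ?_, fun a b c => ?_⟩
  · simp only [hst, hαS, hαβ]
  · simp only [hst, hβS, hαβ]
  · simp only [hst, hβS, hαS, hαβ]
    exact rb_prelie m R lam ha hR S hS _ _ _
end

section
/- Let (A, μ, R, α_A, β_A) be a Rota-Baxter BiHom-associative algebra of weight λ with α_A, β_A bijective, and let (M, R, T, α_M, β_M, α_A, β_A) be a Rota-Baxter paired left (A, μ, α_A, β_A)-module of weight λ with underlying action ▷. Define a⋆b = R(a)b + λab − α_A⁻¹β_A(b)·R(α_Aβ_A⁻¹(a)) and a▷⋆m = R(a)▷m + a▷T(m) + λ·a▷m. Then (M, ▷⋆, α_M, β_M) is a left pre-Lie module over the BiHom-pre-Lie algebra (A, ⋆, α_A, β_A). -/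
/-- `a ▷⋆ m = R(a)▷m + a▷T(m) + λ·a▷m`. -/
def actStar {K A M : Type*} [Field K] [NonUnitalNonAssocRing A] [Module K A]
    [SMulCommClass K A A] [IsScalarTower K A A] [AddCommGroup M] [Module K M]
    (act : A →ₗ[K] M →ₗ[K] M) (R : A →ₗ[K] A) (T : M →ₗ[K] M) (lam : K)
    (a : A) (m : M) : M :=
  act (R a) m + act a (T m) + lam • act a m

/-- Theorem 3.11: if `(A, μ, R, α_A, β_A)` is a Rota-Baxter
BiHom-associative algebra of weight `λ` with `α_A, β_A` bijective and
`(M, R, T, α_M, β_M, α_A, β_A)` is a Rota-Baxter paired left module of weight `λ`,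
then `a▷⋆m = R(a)▷m + a▷T(m) + λa▷m` makes `(M, ▷⋆, α_M, β_M)` a left pre-Lie
module over the BiHom-pre-Lie algebra `(A, ⋆, α_A, β_A)`. -/
theorem stmt17 {K A M : Type*} [Field K] [NonUnitalNonAssocRing A] [Module K A]
    [SMulCommClass K A A] [IsScalarTower K A A] [AddCommGroup M] [Module K M]
    (α β : A ≃ₗ[K] A) (R : A →ₗ[K] A) (lam : K)
    (αM βM : M →ₗ[K] M) (act : A →ₗ[K] M →ₗ[K] M) (T : M →ₗ[K] M)
    -- BiHom-associative algebra axioms for (A, ·, α, β)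
    (hαβ : ∀ a, α (β a) = β (α a))
    (hαmul : ∀ a b, α (a * b) = α a * α b)
    (hβmul : ∀ a b, β (a * b) = β a * β b)
    (hassoc : ∀ a b c, α a * (b * c) = (a * b) * β c)
    -- Rota-Baxter operator of weight λ commuting with α and β
    (hRα : ∀ a, R (α a) = α (R a)) (hRβ : ∀ a, R (β a) = β (R a))
    (hRB : ∀ a b, R a * R b = R (R a * b) + R (a * R b) + lam • R (a * b))
    -- (M, ▷, αM, βM) is a left (A, μ, α, β)-module
    (hMcomm : ∀ m, αM (βM m) = βM (αM m))
    (hMα : ∀ a m, αM (act a m) = act (α a) (αM m))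
    (hMβ : ∀ a m, βM (act a m) = act (β a) (βM m))
    (hMact : ∀ a b m, act (α a) (act b m) = act (a * b) (βM m))
    -- Rota-Baxter paired module structure of weight λ
    (hTα : ∀ m, T (αM m) = αM (T m)) (hTβ : ∀ m, T (βM m) = βM (T m))
    (hpair : ∀ a m, act (R a) (T m) =
      T (act (R a) m) + T (act a (T m)) + lam • T (act a m)) :
    (∀ m, αM (βM m) = βM (αM m)) ∧
    (∀ a m, αM (actStar act R T lam a m) = actStar act R T lam (α a) (αM m)) ∧
    (∀ a m, βM (actStar act R T lam a m) = actStar act R T lam (β a) (βM m)) ∧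
    (∀ a b m,
      actStar act R T lam (α (β a)) (actStar act R T lam (α b) m) -
        actStar act R T lam (starOp α β R lam (β a) (α b)) (βM m) =
      actStar act R T lam (α (β b)) (actStar act R T lam (α a) m) -
        actStar act R T lam (starOp α β R lam (β b) (α a)) (βM m)) := by
  have key : ∀ a b m,
      actStar act R T lam (α (β a)) (actStar act R T lam (α b) m) -
        actStar act R T lam (starOp α β R lam (β a) (α b)) (βM m) =
      actStar act R T lam (β a * R (α b) + β b * R (α a)) (βM m) := by
    intro a b m
    have h1 : starOp α β R lam (β a) (α b) =
        R (β a) * α b + lam • (β a * α b) - β b * R (α a) := by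
      simp only [starOp, ← hαβ, LinearEquiv.symm_apply_apply]
    have h2 : T (actStar act R T lam (α b) m) = act (R (α b)) (T m) := by
      rw [hpair]; simp only [actStar, map_add, map_smul]
    have h3 : act (R (β a) * R (α b)) (βM m) = act (R (R (β a) * α b)) (βM m)
        + act (R (β a * R (α b))) (βM m) + lam • act (R (β a * α b)) (βM m) := by
      rw [hRB]; simp only [map_add, map_smul, LinearMap.add_apply, LinearMap.smul_apply]
    rw [h1]
    generalize hX : actStar act R T lam (α b) m = X at h2
    have h4 : actStar act R T lam (α (β a)) X =
      act (α (R (β a))) X + act (α (β a)) (T X) + lam • act (α (β a)) X := by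
      simp only [actStar, hRα]
    rw [h4, h2, ← hX]
    simp only [actStar, map_add, map_sub, map_smul, LinearMap.add_apply, LinearMap.sub_apply,
      LinearMap.smul_apply, hMact, h3, hTβ, smul_add, smul_sub]
    abel
  refine ⟨hMcomm, ?_, ?_, ?_⟩
  · intro a m
    simp only [actStar, map_add, map_smul, hMα, hRα, hTα]
  · intro a m
    simp only [actStar, map_add, map_smul, hMβ, hRβ, hTβ]
  · intro a b m
    rw [key, key, add_comm]
end

section
/- Let (A, μ, R, α_A, β_A) be a Rota-Baxter BiHom-associative algebra of weight λ with α_A, β_A bijective, and let (M, R, T, α_M, β_M, α_A, β_A) be a Rota-Baxter paired left (A, μ, α_A, β_A)-module of weight λ with underlying action ▷. Define a♮b = R(a)b − α_A⁻¹β_A(b)·R(α_Aβ_A⁻¹(a)) − λ·α_A⁻¹β_A(b)·α_Aβ_A⁻¹(a), and a▷⋆m = R(a)▷m + a▷T(m) + λ·a▷m. Then (A, ♮, α_A, β_A) is a BiHom-pre-Lie algebra and (M, ▷⋆, α_M, β_M) is a left pre-Lie module over (A, ♮, α_A, β_A). -/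
/-- `a ♮ b = R(a)b − α⁻¹β(b)·R(αβ⁻¹(a)) − λ·α⁻¹β(b)·αβ⁻¹(a)`. -/
def natOp {K A : Type*} [Field K] [NonUnitalNonAssocRing A] [Module K A]
    [SMulCommClass K A A] [IsScalarTower K A A]
    (α β : A ≃ₗ[K] A) (R : A →ₗ[K] A) (lam : K) (a b : A) : A :=
  R a * b - α.symm (β b) * R (α (β.symm a)) - lam • (α.symm (β b) * α (β.symm a))

/-- Lemma 3.14 and Theorem 3.15: if `(A, μ, R, α_A, β_A)` is a
Rota-Baxter BiHom-associative algebra of weight `λ` with `α_A, β_A` bijective and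
`(M, R, T, α_M, β_M, α_A, β_A)` is a Rota-Baxter paired left module of weight `λ`,
then `a ♮ b = R(a)b − α⁻¹β(b)R(αβ⁻¹(a)) − λα⁻¹β(b)αβ⁻¹(a)` makes `(A, ♮, α_A, β_A)`
a BiHom-pre-Lie algebra and `a▷⋆m = R(a)▷m + a▷T(m) + λa▷m` makes
`(M, ▷⋆, α_M, β_M)` a left pre-Lie module over it. -/
theorem stmt19 {K A M : Type*} [Field K] [NonUnitalNonAssocRing A] [Module K A]
    [SMulCommClass K A A] [IsScalarTower K A A] [AddCommGroup M] [Module K M]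
    (α β : A ≃ₗ[K] A) (R : A →ₗ[K] A) (lam : K)
    (αM βM : M →ₗ[K] M) (act : A →ₗ[K] M →ₗ[K] M) (T : M →ₗ[K] M)
    -- BiHom-associative algebra axioms for (A, ·, α, β)
    (hαβ : ∀ a, α (β a) = β (α a))
    (hαmul : ∀ a b, α (a * b) = α a * α b)
    (hβmul : ∀ a b, β (a * b) = β a * β b)
    (hassoc : ∀ a b c, α a * (b * c) = (a * b) * β c)
    -- Rota-Baxter operator of weight λ commuting with α and β
    (hRα : ∀ a, R (α a) = α (R a)) (hRβ : ∀ a, R (β a) = β (R a))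
    (hRB : ∀ a b, R a * R b = R (R a * b) + R (a * R b) + lam • R (a * b))
    -- (M, ▷, αM, βM) is a left (A, μ, α, β)-module
    (hMcomm : ∀ m, αM (βM m) = βM (αM m))
    (hMα : ∀ a m, αM (act a m) = act (α a) (αM m))
    (hMβ : ∀ a m, βM (act a m) = act (β a) (βM m))
    (hMact : ∀ a b m, act (α a) (act b m) = act (a * b) (βM m))
    -- Rota-Baxter paired module structure of weight λ
    (hTα : ∀ m, T (αM m) = αM (T m)) (hTβ : ∀ m, T (βM m) = βM (T m))
    (hpair : ∀ a m, act (R a) (T m) =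
      T (act (R a) m) + T (act a (T m)) + lam • T (act a m)) :
    -- (A, ♮, α, β) is a BiHom-pre-Lie algebra
    ((∀ a b, α (natOp α β R lam a b) = natOp α β R lam (α a) (α b)) ∧
     (∀ a b, β (natOp α β R lam a b) = natOp α β R lam (β a) (β b)) ∧
     (∀ a b c,
       natOp α β R lam (α (β a)) (natOp α β R lam (α b) c) -
         natOp α β R lam (natOp α β R lam (β a) (α b)) (β c) =
       natOp α β R lam (α (β b)) (natOp α β R lam (α a) c) -
         natOp α β R lam (natOp α β R lam (β b) (α a)) (β c))) ∧
    -- (M, ▷⋆, αM, βM) is a left pre-Lie module over (A, ♮, α, β)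
    ((∀ m, αM (βM m) = βM (αM m)) ∧
     (∀ a m, αM (actStar act R T lam a m) = actStar act R T lam (α a) (αM m)) ∧
     (∀ a m, βM (actStar act R T lam a m) = actStar act R T lam (β a) (βM m)) ∧
     (∀ a b m,
       actStar act R T lam (α (β a)) (actStar act R T lam (α b) m) -
         actStar act R T lam (natOp α β R lam (β a) (α b)) (βM m) =
       actStar act R T lam (α (β b)) (actStar act R T lam (α a) m) -
         actStar act R T lam (natOp α β R lam (β b) (α a)) (βM m))) := by
  have e1 : ∀ x, β (α x) = α (β x) := fun x => (hαβ x).symm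
  have e2 : ∀ x, α.symm (β x) = β (α.symm x) := fun x => by
    apply α.injective; simp [hαβ]
  have e3 : ∀ x, β.symm (α x) = α (β.symm x) := fun x => by
    apply β.injective; simp [e1]
  have e5 : ∀ x, β.symm (α.symm x) = α.symm (β.symm x) := fun x => by
    apply β.injective; apply α.injective; simp [hαβ, e1, ← e2]
  have f3 : ∀ x, α (β.symm x) = β.symm (α x) := fun x => (e3 x).symm
  have f5 : ∀ x, α.symm (β.symm x) = β.symm (α.symm x) := fun x => (e5 x).symm
  have e6 : ∀ x y, α.symm (x * y) = α.symm x * α.symm y := fun x y => by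
    apply α.injective; simp [hαmul]
  have e7 : ∀ x y, β.symm (x * y) = β.symm x * β.symm y := fun x y => by
    apply β.injective; simp [hβmul]
  have r1 : ∀ x, α (R x) = R (α x) := fun x => (hRα x).symm
  have r2 : ∀ x, β (R x) = R (β x) := fun x => (hRβ x).symm
  have r3 : ∀ x, α.symm (R x) = R (α.symm x) := fun x => by
    apply α.injective; simp [r1]
  have r4 : ∀ x, β.symm (R x) = R (β.symm x) := fun x => by
    apply β.injective; simp [r2]
  have as : ∀ x y z, (x * y) * z = α x * (y * β.symm z) := fun x y z => by
    rw [hassoc]; simp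
  have rb : ∀ a b, R (R a * b) = R a * R b - R (a * R b) - lam • R (a * b) := fun a b => by
    rw [hRB]; abel
  refine ⟨⟨?_, ?_, ?_⟩, hMcomm, ?_, ?_, ?_⟩
  · intro a b
    simp [natOp, hαβ, e2, f3, f5, e6, e7, r1, r2, r3, r4, hαmul, hβmul]
  · intro a b
    simp [natOp, hαβ, e2, f3, f5, e6, e7, r1, r2, r3, r4, hαmul, hβmul]
  · intro a b c
    simp only [natOp, hαβ, e2, f3, f5, e6, e7, r1, r2, r3, r4, hαmul, hβmul, map_sub, map_add,
      map_smul, mul_sub, sub_mul, mul_add, add_mul, smul_mul_assoc, mul_smul_comm, as, rb,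
      LinearEquiv.symm_apply_apply, LinearEquiv.apply_symm_apply]
    module
  · intro a m
    simp [actStar, hMα, hTα, r1]
  · intro a m
    simp [actStar, hMβ, hTβ, r2]
  · intro a b m
    have key : ∀ X Y m, actStar act R T lam (α X) (actStar act R T lam Y m) =
        actStar act R T lam (R X * Y + X * R Y + lam • (X * Y)) (βM m) := by
      intro X Y m
      have hT : T (actStar act R T lam Y m) = act (R Y) (T m) := by
        rw [hpair]; simp [actStar]
      have hR : R (R X * Y + X * R Y + lam • (X * Y)) = R X * R Y := by
        rw [hRB]; simp
      unfold actStar at hT ⊢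
      rw [hT, hR, hRα]
      simp only [map_add, map_smul, hMact, hTβ, LinearMap.add_apply, LinearMap.smul_apply]
      module
    have n : ∀ a b, natOp α β R lam (β a) (α b) =
        R (β a) * α b - β b * R (α a) - lam • (β b * α a) := by
      intro a b; simp [natOp, e1, e2]
    rw [key, key, n, n]
    simp only [actStar, map_add, map_sub, map_smul, LinearMap.add_apply, LinearMap.sub_apply,
      LinearMap.smul_apply]
    module
end
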